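/- Let n ≥ 2 be an integer. The number of tuples (k_1, …, k_{n−1}) of integers with each k_i ∈ {1, …, n−1} and such that for all indices 1 ≤ r ≤ s ≤ n−1 the consecutive sum k_r + k_{r+1} + ⋯ + k_s is not divisible by n, is exactly (n−1)!. -/

import Mathlib

/-!
Record a tuple `k` by its partial sums `0, k₁, k₁ + k₂, …`. A consecutive sum is the difference of
two partial sums, so no consecutive sum vanishes in a group `G` exactly when the partial sums are
pairwise distinct, that is, when those after the initial `0` form an arbitrary injective tuple of
nonzero elements of `G`. There are `(|G| - 1)(|G| - 2)⋯(|G| - m)` of these for tuples of length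
`m`. The integer tuples of the theorem are the representatives in `{1, …, n - 1}` of such tuples in
`ℤ/n`, of length `n - 1`.
-/

section ConsecutiveSums

open Function

variable {m : ℕ}

/-- A tuple `x` has nonzero consecutive sums if `x r + ⋯ + x s ≠ 0` for all `r ≤ s`. For tuples of
residues modulo `n` this is the generality condition on polarizations. -/
def ConsecutiveSumsNeZero {M : Type*} [AddCommMonoid M] (x : Fin m → M) : Prop :=
  ∀ r s, r ≤ s → ∑ i ∈ Finset.Icc r s, x i ≠ 0

theorem ConsecutiveSumsNeZero.apply_ne_zero {M : Type*} [AddCommMonoid M] {x : Fin m → M}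
    (hx : ConsecutiveSumsNeZero x) (i : Fin m) : x i ≠ 0 := by
  simpa only [Finset.Icc_self, Finset.sum_singleton] using hx i i le_rfl

theorem sum_Icc_eq_partialSum_sub {G : Type*} [AddCommGroup G] (x : Fin m → G) {r s : Fin m}
    (hrs : r ≤ s) :
    ∑ i ∈ Finset.Icc r s, x i = Fin.partialSum x s.succ - Fin.partialSum x r.castSucc := by
  rw [← Fin.sum_Icc_sub hrs]
  simp only [Fin.partialSum_succ, add_sub_cancel_left]

theorem injective_partialSum_iff {G : Type*} [AddCommGroup G] (x : Fin m → G) :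
    Injective (Fin.partialSum x) ↔ ConsecutiveSumsNeZero x := by
  constructor
  · intro hinj r s hrs
    rw [sum_Icc_eq_partialSum_sub x hrs, sub_ne_zero]
    exact hinj.ne (Fin.castSucc_lt_succ_iff.mpr hrs).ne'
  · intro hx
    refine Injective.of_lt_imp_ne fun a b hab ↦ ?_
    obtain ⟨r, rfl⟩ := Fin.exists_castSucc_eq.mpr (Fin.ne_last_of_lt hab)
    obtain ⟨s, rfl⟩ := Fin.exists_succ_eq.mpr (Fin.ne_zero_of_lt hab)
    have hrs : r ≤ s := Fin.castSucc_lt_succ_iff.mp hab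
    have hsum := hx r s hrs
    rw [sum_Icc_eq_partialSum_sub x hrs, sub_ne_zero] at hsum
    exact hsum.symm

theorem cons_zero_tail_partialSum {M : Type*} [AddMonoid M] (x : Fin m → M) :
    Fin.cons 0 (Fin.tail (Fin.partialSum x)) = Fin.partialSum x := by
  rw [← Fin.partialSum_zero x, Fin.cons_self_tail]

/-- The bijection from tuples to their partial sums, the initial `0` omitted. Its inverse
prepends that `0` and takes successive differences. -/
def partialSumEquiv (G : Type*) [AddGroup G] : (Fin m → G) ≃ (Fin m → G) where
  toFun x := Fin.tail (Fin.partialSum x)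
  invFun y :=
    let z : Fin (m + 1) → G := Fin.cons 0 y
    fun i ↦ -z i.castSucc + z i.succ
  left_inv x := by
    simp only [cons_zero_tail_partialSum, Fin.partialSum_right_neg]
  right_inv y := by
    have h := Fin.partialSum_left_neg (Fin.cons 0 y : Fin (m + 1) → G)
    rw [Fin.cons_zero, zero_vadd] at h
    simp only [h, Fin.tail_cons]

theorem card_injective_cons {α : Type*} [Finite α] (a : α) :
    Nat.card {y : Fin m → α // Injective (Fin.cons a y : Fin (m + 1) → α)} =
      (Nat.card α - 1).descFactorial m := by
  classical
  have := Fintype.ofFinite α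
  let e : {y : Fin m → α // Injective (Fin.cons a y : Fin (m + 1) → α)} ≃
      (Fin m ↪ {b : α // b ≠ a}) :=
    { toFun y := ⟨fun i ↦ ⟨y.1 i, fun h ↦ (Fin.cons_injective_iff.mp y.2).1 ⟨i, h⟩⟩,
        fun _ _ h ↦ (Fin.cons_injective_iff.mp y.2).2 (congrArg Subtype.val h)⟩
      invFun f := ⟨fun i ↦ f i, Fin.cons_injective_iff.mpr
        ⟨fun ⟨i, hi⟩ ↦ (f i).2 hi, Subtype.val_injective.comp f.injective⟩⟩ }
  rw [Nat.card_congr e, Nat.card_eq_fintype_card, Fintype.card_embedding_eq, Fintype.card_fin,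
    Fintype.card_subtype_compl, Fintype.card_subtype_eq, Nat.card_eq_fintype_card]

theorem card_consecutiveSumsNeZero (G : Type*) [AddCommGroup G] [Finite G] :
    Nat.card {x : Fin m → G // ConsecutiveSumsNeZero x} = (Nat.card G - 1).descFactorial m := by
  rw [← card_injective_cons (0 : G)]
  refine Nat.card_congr ((partialSumEquiv G).subtypeEquiv fun x ↦ ?_)
  rw [← injective_partialSum_iff, ← cons_zero_tail_partialSum]
  rfl

theorem consecutiveSumsNeZero_intCast_iff (n : ℕ) (k : Fin m → ℤ) :
    ConsecutiveSumsNeZero (fun i ↦ (k i : ZMod n)) ↔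
      ∀ r s, r ≤ s → ¬ (n : ℤ) ∣ ∑ i ∈ Finset.Icc r s, k i := by
  simp only [ConsecutiveSumsNeZero, ne_eq, ← Int.cast_sum, ZMod.intCast_zmod_eq_zero_iff_dvd]

/-- Reduction modulo `n` identifies the integer tuples of the counting problem with the residue
tuples that have nonzero consecutive sums. -/
def reductionEquiv (n : ℕ) [NeZero n] :
    {k : Fin m → ℤ // (∀ i, 1 ≤ k i ∧ k i ≤ (n : ℤ) - 1) ∧
      ∀ r s, r ≤ s → ¬ (n : ℤ) ∣ ∑ i ∈ Finset.Icc r s, k i} ≃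
    {x : Fin m → ZMod n // ConsecutiveSumsNeZero x} where
  toFun k := ⟨fun i ↦ (k.1 i : ZMod n), (consecutiveSumsNeZero_intCast_iff n k.1).mpr k.2.2⟩
  invFun x := ⟨fun i ↦ ((x.1 i).val : ℤ), fun i ↦ by
      have hpos : 0 < (x.1 i).val := ZMod.val_pos.mpr (x.2.apply_ne_zero i)
      have hlt : (x.1 i).val < n := ZMod.val_lt _
      lia,
    (consecutiveSumsNeZero_intCast_iff n _).mp (by simpa using x.2)⟩
  left_inv k := by
    ext i
    obtain ⟨hpos, hle⟩ := k.2.1 i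
    simpa only [ZMod.val_intCast] using Int.emod_eq_of_lt (by lia) (by lia)
  right_inv x := by
    ext i
    simp

theorem count_general_polarizations_cycle_general (n : ℕ) [NeZero n] :
    Nat.card {k : Fin m → ℤ //
      (∀ i, 1 ≤ k i ∧ k i ≤ (n : ℤ) - 1) ∧
      (∀ r s : Fin m, r ≤ s →
        ¬ ((n : ℤ) ∣ ∑ i ∈ Finset.Icc r s, k i))} = (n - 1).descFactorial m := by
  rw [Nat.card_congr (reductionEquiv n), card_consecutiveSumsNeZero, Nat.card_zmod]

end ConsecutiveSums

/-- **Counting general polarizations for a type `Iₙ` Kodaira curve.**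
For `n ≥ 2`, the number of tuples `(k₁, …, k_{n−1})` of integers with each
`kᵢ ∈ {1, …, n−1}` such that no consecutive sum `k_r + ⋯ + k_s`
(`1 ≤ r ≤ s ≤ n−1`) is divisible by `n`, is exactly `(n−1)!`. -/
theorem count_general_polarizations_cycle (n : ℕ) (hn : 2 ≤ n) :
    Nat.card {k : Fin (n - 1) → ℤ //
      (∀ i, 1 ≤ k i ∧ k i ≤ (n : ℤ) - 1) ∧
      (∀ r s : Fin (n - 1), r ≤ s →
        ¬ ((n : ℤ) ∣ ∑ i ∈ Finset.Icc r s, k i))} = Nat.factorial (n - 1) := by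
  have : NeZero n := ⟨by lia⟩
  rw [count_general_polarizations_cycle_general, Nat.descFactorial_self]
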